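/- For every integer w ≥ 4, with u = w−2 and v = w−1, ∑_{a+c=w−1, a,c≥1} ζ(ā,1̄,c) = ζ(1̄,1̄,ū) + ζ(2,ū) + ζ(v̄,1̄). -/

import Mathlib

open Filter

/-- Depth-1 Euler sum `ζ(s; e) = ∑_{n ≥ 1} eⁿ / nˢ`,
defined as the limit of partial sums. `e = 1` gives `ζ(s)`, `e = -1` gives `ζ(s̄)`. -/
noncomputable def eulerSum1 (s : ℕ) (e : ℝ) : ℝ :=
  limUnder atTop (fun N : ℕ =>
    ∑ n ∈ Finset.Icc 1 N, e ^ n / (n : ℝ) ^ s)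

/-- Depth-2 Euler sum `ζ(s₁, s₂; e₁, e₂) = ∑_{n₁ > n₂ ≥ 1} e₁^{n₁} e₂^{n₂} / (n₁^{s₁} n₂^{s₂})`,
defined as the limit of iterated partial sums. A bar over an argument means the
corresponding sign is `-1`. -/
noncomputable def eulerSum2 (s₁ s₂ : ℕ) (e₁ e₂ : ℝ) : ℝ :=
  limUnder atTop (fun N : ℕ =>
    ∑ n₁ ∈ Finset.Icc 1 N, ∑ n₂ ∈ Finset.Ico 1 n₁,
      e₁ ^ n₁ * e₂ ^ n₂ / ((n₁ : ℝ) ^ s₁ * (n₂ : ℝ) ^ s₂))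

/-- Depth-3 Euler sum
`ζ(s₁, s₂, s₃; e₁, e₂, e₃) = ∑_{n₁ > n₂ > n₃ ≥ 1} e₁^{n₁} e₂^{n₂} e₃^{n₃} / (n₁^{s₁} n₂^{s₂} n₃^{s₃})`. -/
noncomputable def eulerSum3 (s₁ s₂ s₃ : ℕ) (e₁ e₂ e₃ : ℝ) : ℝ :=
  limUnder atTop (fun N : ℕ =>
    ∑ n₁ ∈ Finset.Icc 1 N, ∑ n₂ ∈ Finset.Ico 1 n₁, ∑ n₃ ∈ Finset.Ico 1 n₂,
      e₁ ^ n₁ * e₂ ^ n₂ * e₃ ^ n₃ / ((n₁ : ℝ) ^ s₁ * (n₂ : ℝ) ^ s₂ * (n₃ : ℝ) ^ s₃))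

/-- Depth-1 multiple T-value `T(s) = 2 ∑_{m odd, m ≥ 1} 1 / mˢ`. -/
noncomputable def tValue1 (s : ℕ) : ℝ :=
  limUnder atTop (fun N : ℕ =>
    ∑ m ∈ Finset.Icc 1 N, if m % 2 = 1 then 2 / (m : ℝ) ^ s else 0)

/-- Depth-2 multiple T-value
`T(s₁, s₂) = ∑_{m₁ > m₂ > 0, m₁ even, m₂ odd} 4 / (m₁^{s₁} m₂^{s₂})`. -/
noncomputable def tValue2 (s₁ s₂ : ℕ) : ℝ :=
  limUnder atTop (fun N : ℕ =>
    ∑ m₁ ∈ Finset.Icc 1 N, ∑ m₂ ∈ Finset.Ico 1 m₁,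
      if m₁ % 2 = 0 ∧ m₂ % 2 = 1 then 4 / ((m₁ : ℝ) ^ s₁ * (m₂ : ℝ) ^ s₂) else 0)

/-- Depth-3 multiple T-value
`T(s₁, s₂, s₃) = ∑_{m₁ > m₂ > m₃ > 0, m₁ odd, m₂ even, m₃ odd} 8 / (m₁^{s₁} m₂^{s₂} m₃^{s₃})`. -/
noncomputable def tValue3 (s₁ s₂ s₃ : ℕ) : ℝ :=
  limUnder atTop (fun N : ℕ =>
    ∑ m₁ ∈ Finset.Icc 1 N, ∑ m₂ ∈ Finset.Ico 1 m₁, ∑ m₃ ∈ Finset.Ico 1 m₂,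
      if m₁ % 2 = 1 ∧ m₂ % 2 = 0 ∧ m₃ % 2 = 1 then
        8 / ((m₁ : ℝ) ^ s₁ * (m₂ : ℝ) ^ s₂ * (m₃ : ℝ) ^ s₃) else 0)

/-- Blocks of the alternating harmonic series, `∑_{k < m ≤ q} (-1)ᵐ / m`. -/
noncomputable def altHarmonic (k q : ℕ) : ℝ :=
  ∑ m ∈ Finset.Ioc k q, (-1 : ℝ) ^ m / m

lemma altHarmonic_of_le {k q : ℕ} (h : q ≤ k) : altHarmonic k q = 0 := by
  simp [altHarmonic, Finset.Ioc_eq_empty_of_le h]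

lemma altHarmonic_succ {k q : ℕ} (h : k ≤ q) :
    altHarmonic k (q + 1) = altHarmonic k q + (-1) ^ (q + 1) / ((q : ℝ) + 1) := by
  unfold altHarmonic
  rw [← Finset.insert_Ioc_right_eq_Ioc_add_one h, Finset.sum_insert (by simp)]
  push_cast
  ring

lemma altHarmonic_signed_mem (d k : ℕ) :
    0 ≤ (-1) ^ (k + 1) * altHarmonic k (k + d) ∧
      (-1) ^ (k + 1) * altHarmonic k (k + d) ≤ 1 / ((k : ℝ) + 1) := by
  induction d generalizing k with
  | zero => simp [altHarmonic_of_le]; positivity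
  | succ d ih =>
    obtain ⟨h0, h1⟩ := ih (k + 1)
    have hsplit : altHarmonic k (k + (d + 1)) =
        (-1) ^ (k + 1) / ((k : ℝ) + 1) + altHarmonic (k + 1) (k + 1 + d) := by
      unfold altHarmonic
      rw [← Finset.insert_Ioc_add_one_left_eq_Ioc (by omega : k < k + (d + 1)),
        Finset.sum_insert (by simp)]
      rw [show k + (d + 1) = k + 1 + d by ring]
      push_cast
      ring
    have hs : ((-1 : ℝ) ^ (k + 1)) * (-1) ^ (k + 1) = 1 := by
      rw [← mul_pow]; simp
    have hx : (-1 : ℝ) ^ (k + 1) * altHarmonic k (k + (d + 1)) =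
        1 / ((k : ℝ) + 1) - (-1) ^ (k + 1 + 1) * altHarmonic (k + 1) (k + 1 + d) := by
      rw [hsplit, mul_add, ← mul_div_assoc, hs, pow_succ _ (k + 1)]
      ring
    rw [hx]
    have h2 : 1 / (((k + 1 : ℕ) : ℝ) + 1) ≤ 1 / ((k : ℝ) + 1) := by
      push_cast
      gcongr
      linarith
    constructor <;> linarith

lemma abs_altHarmonic_le (k q : ℕ) : |altHarmonic k q| ≤ 1 / ((k : ℝ) + 1) := by
  rcases le_total q k with h | h
  · rw [altHarmonic_of_le h, abs_zero]; positivity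
  · obtain ⟨d, rfl⟩ := Nat.exists_eq_add_of_le h
    obtain ⟨h0, h1⟩ := altHarmonic_signed_mem d k
    have : |altHarmonic k (k + d)| = |(-1) ^ (k + 1) * altHarmonic k (k + d)| := by
      simp [abs_mul]
    rw [this, abs_of_nonneg h0]
    exact h1

lemma abs_altHarmonic_le_one (k q : ℕ) : |altHarmonic k q| ≤ 1 := by
  refine (abs_altHarmonic_le k q).trans ?_
  rw [div_le_one (by positivity)]
  have : (0 : ℝ) ≤ k := by positivity
  linarith

lemma altHarmonic_eq_sum_range (k q : ℕ) :
    altHarmonic k q = ∑ m ∈ Finset.range (q + 1), if k < m then (-1 : ℝ) ^ m / m else 0 := by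
  rw [← Finset.sum_filter]
  unfold altHarmonic
  congr 1
  ext m
  simp
  omega

/-- Summation by parts against an alternating sign. -/
lemma two_mul_sum_alternating (f : ℕ → ℝ) (M : ℕ) :
    2 * ∑ i ∈ Finset.range M, (-1 : ℝ) ^ i * f i =
      f 0 - (-1) ^ M * f M + ∑ i ∈ Finset.range M, (-1 : ℝ) ^ i * (f i - f (i + 1)) := by
  induction M with
  | zero => simp
  | succ M ih =>
    rw [Finset.sum_range_succ, Finset.sum_range_succ, mul_add, ih, pow_succ]
    ring

lemma sum_one_div_consecutive_le_one (M : ℕ) :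
    ∑ i ∈ Finset.range M, 1 / (((i : ℝ) + 1) * (i + 2)) ≤ 1 := by
  have h : ∑ i ∈ Finset.range M, 1 / (((i : ℝ) + 1) * (i + 2)) = 1 - 1 / ((M : ℝ) + 1) := by
    induction M with
    | zero => simp
    | succ M ih =>
      rw [Finset.sum_range_succ, ih]
      push_cast
      field_simp
      ring
  rw [h]
  have : 0 ≤ 1 / ((M : ℝ) + 1) := by positivity
  linarith

lemma abs_sum_alternating_div_le (t : ℕ → ℝ) (c : ℕ) (ht : ∀ i, |t i| ≤ 1)
    (ht' : ∀ i, |t (i + 1) - t i| ≤ 1 / ((i : ℝ) + 1)) (M : ℕ) :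
    |∑ i ∈ Finset.range M, (-1 : ℝ) ^ i * (t i / ((c : ℝ) + 1 + i))| ≤ 2 := by
  have key := two_mul_sum_alternating (fun i => t i / ((c : ℝ) + 1 + i)) M
  have hc : (0 : ℝ) ≤ c := by positivity
  have hbd : ∀ i : ℕ, |t i / ((c : ℝ) + 1 + i)| ≤ 1 := by
    intro i
    have hi : (0 : ℝ) ≤ i := by positivity
    rw [abs_div, abs_of_pos (by positivity : (0 : ℝ) < (c : ℝ) + 1 + i)]
    rw [div_le_one (by positivity)]
    linarith [ht i]
  have hdiff : ∀ i : ℕ, |(-1 : ℝ) ^ i * (t i / ((c : ℝ) + 1 + i) -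
      t (i + 1) / ((c : ℝ) + 1 + ((i + 1 : ℕ) : ℝ)))| ≤ 2 * (1 / (((i : ℝ) + 1) * (i + 2))) := by
    intro i
    have hi : (0 : ℝ) ≤ i := by positivity
    rw [abs_mul, abs_pow, abs_neg, abs_one, one_pow, one_mul]
    have e : t i / ((c : ℝ) + 1 + i) - t (i + 1) / ((c : ℝ) + 1 + ((i + 1 : ℕ) : ℝ)) =
        t i * (1 / (((c : ℝ) + 1 + i) * (c + 2 + i))) -
          (t (i + 1) - t i) * (1 / ((c : ℝ) + 2 + i)) := by
      push_cast
      have h1 : (c : ℝ) + 1 + i ≠ 0 := by positivity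
      have h2 : (c : ℝ) + 2 + i ≠ 0 := by positivity
      have h3 : (c : ℝ) + 1 + (i + 1) ≠ 0 := by positivity
      field_simp
      ring
    rw [e]
    refine (abs_sub _ _).trans ?_
    rw [abs_mul, abs_mul, abs_of_pos (by positivity : (0 : ℝ) < 1 / (((c : ℝ) + 1 + i) * (c + 2 + i))),
      abs_of_pos (by positivity : (0 : ℝ) < 1 / ((c : ℝ) + 2 + i)), two_mul]
    refine add_le_add ?_ ?_
    · calc |t i| * (1 / (((c : ℝ) + 1 + i) * (c + 2 + i)))
          ≤ 1 * (1 / (((i : ℝ) + 1) * (i + 2))) := by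
            refine mul_le_mul (ht i) (one_div_le_one_div_of_le (by positivity) ?_) (by positivity)
              zero_le_one
            exact mul_le_mul (by linarith) (by linarith) (by positivity) (by positivity)
        _ = _ := one_mul _
    · calc |t (i + 1) - t i| * (1 / ((c : ℝ) + 2 + i))
          ≤ (1 / ((i : ℝ) + 1)) * (1 / ((i : ℝ) + 2)) := by
            exact mul_le_mul (ht' i) (one_div_le_one_div_of_le (by positivity) (by linarith))
              (by positivity) (by positivity)
        _ = _ := by rw [one_div_mul_one_div]
  have h0 := hbd 0
  have hM : |(-1 : ℝ) ^ M * (t M / ((c : ℝ) + 1 + M))| ≤ 1 := by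
    rw [abs_mul, abs_pow, abs_neg, abs_one, one_pow, one_mul]
    exact hbd M
  have hS : |∑ i ∈ Finset.range M, (-1 : ℝ) ^ i * (t i / ((c : ℝ) + 1 + i) -
      t (i + 1) / ((c : ℝ) + 1 + ((i + 1 : ℕ) : ℝ)))| ≤ 2 := by
    refine (Finset.abs_sum_le_sum_abs _ _).trans ((Finset.sum_le_sum fun i _ => hdiff i).trans ?_)
    rw [← Finset.mul_sum]
    linarith [sum_one_div_consecutive_le_one M]
  rw [abs_le] at *
  constructor <;> linarith [h0.1, h0.2, hM.1, hM.2, hS.1, hS.2]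

lemma abs_altHarmonic_succ_sub_le {k q i : ℕ} (h : k ≤ q) (hi : i ≤ q) :
    |altHarmonic k (q + 1) - altHarmonic k q| ≤ 1 / ((i : ℝ) + 1) := by
  rw [altHarmonic_succ h, add_sub_cancel_left, abs_div, abs_pow, abs_neg, abs_one, one_pow,
    abs_of_pos (by positivity : (0 : ℝ) < (q : ℝ) + 1)]
  gcongr

/-- `∑_{k < m < n ≤ N} (-1)ⁿ⁺ᵐ / (m (n - k))`. -/
noncomputable def shiftedSum (k N : ℕ) : ℝ :=
  ∑ n ∈ Finset.Ioc k N, (-1 : ℝ) ^ n / ((n : ℝ) - k) * altHarmonic k (n - 1)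

/-- `∑_{k < m ≤ n ≤ N} (-1)ⁿ⁺ᵐ / (m n)`. -/
noncomputable def unshiftedSum (k N : ℕ) : ℝ :=
  ∑ n ∈ Finset.Ioc k N, (-1 : ℝ) ^ n / n * altHarmonic k n

/-- `∑_{l < m < k} (-1)ᵏ⁺ᵐ / (m (k - l))`. -/
noncomputable def reflectedSum (k : ℕ) : ℝ :=
  (-1 : ℝ) ^ k * ∑ l ∈ Finset.Ico 1 k, altHarmonic l (k - 1) / ((k : ℝ) - l)

lemma sum_Ioc_eq_sum_range_add (f : ℕ → ℝ) (k M : ℕ) :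
    ∑ n ∈ Finset.Ioc k (k + M), f n = ∑ i ∈ Finset.range M, f (k + 1 + i) := by
  rw [← Finset.Ico_add_one_add_one_eq_Ioc, Finset.sum_Ico_eq_sum_range]
  congr 2
  omega

lemma shiftedSum_add (k M : ℕ) : shiftedSum k (k + M) =
    ∑ i ∈ Finset.range M, (-1 : ℝ) ^ (k + 1 + i) / ((i : ℝ) + 1) * altHarmonic k (k + i) := by
  rw [shiftedSum, sum_Ioc_eq_sum_range_add]
  refine Finset.sum_congr rfl fun i _ => ?_
  rw [show k + 1 + i - 1 = k + i by omega]
  push_cast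
  congr 2
  ring

lemma abs_shiftedSum_le (k N : ℕ) : |shiftedSum k N| ≤ 2 := by
  rcases le_total N k with h | h
  · simp [shiftedSum, Finset.Ioc_eq_empty_of_le h]
  obtain ⟨M, rfl⟩ := Nat.exists_eq_add_of_le h
  have := abs_sum_alternating_div_le (fun i => altHarmonic k (k + i)) 0
    (fun i => abs_altHarmonic_le_one _ _)
    (fun i => abs_altHarmonic_succ_sub_le (q := k + i) (by omega) (by omega)) M
  have e : shiftedSum k (k + M) = (-1) ^ (k + 1) * ∑ i ∈ Finset.range M,
      (-1 : ℝ) ^ i * (altHarmonic k (k + i) / (((0 : ℕ) : ℝ) + 1 + i)) := by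
    rw [shiftedSum_add, Finset.mul_sum]
    refine Finset.sum_congr rfl fun i _ => ?_
    rw [pow_add _ (k + 1) i, Nat.cast_zero, zero_add, add_comm (1 : ℝ)]
    ring
  rw [e, abs_mul, abs_pow, abs_neg, abs_one, one_pow, one_mul]
  exact this

lemma abs_unshiftedSum_le (k N : ℕ) : |unshiftedSum k N| ≤ 2 := by
  rcases le_total N k with h | h
  · simp [unshiftedSum, Finset.Ioc_eq_empty_of_le h]
  obtain ⟨M, rfl⟩ := Nat.exists_eq_add_of_le h
  have := abs_sum_alternating_div_le (fun i => altHarmonic k (k + 1 + i)) k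
    (fun i => abs_altHarmonic_le_one _ _)
    (fun i => abs_altHarmonic_succ_sub_le (q := k + 1 + i) (by omega) (by omega)) M
  have e : unshiftedSum k (k + M) = (-1) ^ (k + 1) * ∑ i ∈ Finset.range M,
      (-1 : ℝ) ^ i * (altHarmonic k (k + 1 + i) / ((k : ℝ) + 1 + i)) := by
    rw [unshiftedSum, sum_Ioc_eq_sum_range_add, Finset.mul_sum]
    refine Finset.sum_congr rfl fun i _ => ?_
    rw [pow_add _ (k + 1) i]
    push_cast
    ring
  rw [e, abs_mul, abs_pow, abs_neg, abs_one, one_pow, one_mul]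
  exact this

lemma abs_reflectedSum_le (k : ℕ) : |reflectedSum k| ≤ 1 := by
  rw [reflectedSum, abs_mul, abs_pow, abs_neg, abs_one, one_pow, one_mul]
  refine (Finset.abs_sum_le_sum_abs _ _).trans ?_
  have hb : ∀ l ∈ Finset.Ico 1 k, |altHarmonic l (k - 1) / ((k : ℝ) - l)| ≤ 1 / k := by
    intro l hl
    rw [Finset.mem_Ico] at hl
    have h1 : (l : ℝ) + 1 ≤ k := by exact_mod_cast hl.2
    have h0 : (1 : ℝ) ≤ l := by exact_mod_cast hl.1
    rw [abs_div, abs_of_pos (by linarith : (0 : ℝ) < (k : ℝ) - l), div_le_div_iff₀ (by linarith)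
      (by linarith)]
    have h2 := abs_altHarmonic_le l (k - 1)
    rw [le_div_iff₀ (by linarith)] at h2
    have h3 : (k : ℝ) ≤ (l + 1) * (k - l) := by nlinarith
    nlinarith [abs_nonneg (altHarmonic l (k - 1)), mul_le_mul_of_nonneg_left h3
      (abs_nonneg (altHarmonic l (k - 1))), mul_le_mul_of_nonneg_right h2 (by linarith : (0 : ℝ) ≤ (k : ℝ) - l)]
  refine (Finset.sum_le_sum hb).trans ?_
  rw [Finset.sum_const, Nat.card_Ico, nsmul_eq_mul, mul_one_div]
  refine div_le_one_of_le₀ ?_ (by positivity)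
  exact_mod_cast Nat.sub_le k 1

lemma tendsto_one_div_add (b : ℕ) :
    Tendsto (fun M : ℕ => 1 / ((M : ℝ) + 1 + b)) atTop (nhds 0) := by
  have h := (tendsto_one_div_add_atTop_nhds_zero_nat (𝕜 := ℝ)).comp (tendsto_add_atTop_nat b)
  refine h.congr fun M => ?_
  simp only [Function.comp]
  push_cast
  ring

lemma sum_telescope_of_le (j c M : ℕ) (hM : c ≤ M) :
    ∑ p ∈ Finset.range M, (if c ≤ p then
        1 / ((p : ℝ) + 1) - 1 / ((p : ℝ) + 1 + j) else 0) =
      ∑ i ∈ Finset.range j, 1 / ((c : ℝ) + 1 + i) - ∑ i ∈ Finset.range j, 1 / ((M : ℝ) + 1 + i) := by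
  induction M, hM using Nat.le_induction with
  | base =>
    rw [sub_self]
    refine Finset.sum_eq_zero fun p hp => if_neg ?_
    rw [Finset.mem_range] at hp
    omega
  | succ M hM ih =>
    rw [Finset.sum_range_succ, ih, if_pos hM]
    have h1 := Finset.sum_range_succ (fun i : ℕ => 1 / ((M : ℝ) + 1 + i)) j
    have h2 := Finset.sum_range_succ' (fun i : ℕ => 1 / ((M : ℝ) + 1 + i)) j
    have h3 : ∑ i ∈ Finset.range j, 1 / (((M + 1 : ℕ) : ℝ) + 1 + i) =
        ∑ i ∈ Finset.range j, 1 / ((M : ℝ) + 1 + ((i + 1 : ℕ) : ℝ)) := by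
      refine Finset.sum_congr rfl fun i _ => ?_
      push_cast
      ring
    rw [h3]
    simp only [Nat.cast_zero, add_zero] at h2
    linarith

lemma tendsto_sum_one_div_mul_shift (j c : ℕ) (hj : 0 < j) :
    Tendsto (fun M : ℕ => ∑ p ∈ Finset.range M, (if c ≤ p then
        1 / (((p : ℝ) + 1) * ((p : ℝ) + 1 + j)) else 0)) atTop
      (nhds (1 / (j : ℝ) * ∑ i ∈ Finset.range j, 1 / ((c : ℝ) + 1 + i))) := by
  have h : Tendsto (fun M : ℕ => 1 / (j : ℝ) * (∑ i ∈ Finset.range j, 1 / ((c : ℝ) + 1 + i) -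
      ∑ i ∈ Finset.range j, 1 / ((M : ℝ) + 1 + i))) atTop
      (nhds (1 / (j : ℝ) * (∑ i ∈ Finset.range j, 1 / ((c : ℝ) + 1 + i) -
        ∑ i ∈ Finset.range j, (0 : ℝ)))) :=
    (tendsto_const_nhds.sub (tendsto_finsetSum _ fun i _ => tendsto_one_div_add i)).const_mul _
  rw [Finset.sum_const_zero, sub_zero] at h
  refine h.congr' ?_
  filter_upwards [eventually_ge_atTop c] with M hM
  rw [← sum_telescope_of_le j c M hM, Finset.mul_sum]
  refine Finset.sum_congr rfl fun p _ => ?_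
  split_ifs
  · have : (j : ℝ) ≠ 0 := by positivity
    field_simp
    ring
  · simp

lemma altHarmonic_window (K p : ℕ) :
    altHarmonic (K + 1) (K + 1 + p) - altHarmonic (K + 1) (p + 1) =
      ∑ x ∈ Finset.range K, if K - x ≤ p then
        (-1 : ℝ) ^ (p + 1 + (x + 1)) / ((p : ℝ) + 1 + ((x + 1 : ℕ) : ℝ)) else 0 := by
  rw [altHarmonic_eq_sum_range, altHarmonic_eq_sum_range,
    show K + 1 + p + 1 = p + 1 + 1 + K by ring, Finset.sum_range_add, add_sub_cancel_left]
  refine Finset.sum_congr rfl fun x hx => ?_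
  rw [Finset.mem_range] at hx
  rw [show p + 1 + 1 + x = p + 1 + (x + 1) by ring]
  refine if_congr (by omega) ?_ rfl
  push_cast
  rfl

/-- The harmonic block that both the shifted sums and the reflected sum produce. -/
lemma tendsto_window_sum (K : ℕ) :
    Tendsto (fun M : ℕ => ∑ p ∈ Finset.range M, (-1 : ℝ) ^ (p + 1) / ((p : ℝ) + 1) *
        (altHarmonic (K + 1) (K + 1 + p) - altHarmonic (K + 1) (p + 1))) atTop
      (nhds (∑ x ∈ Finset.range K, (-1 : ℝ) ^ (x + 1) / ((x + 1 : ℕ) : ℝ) *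
        ∑ i ∈ Finset.range (x + 1), 1 / (((K - x : ℕ) : ℝ) + 1 + i))) := by
  have h := tendsto_finsetSum (Finset.range K) fun x _ =>
    (tendsto_sum_one_div_mul_shift (x + 1) (K - x) (by omega)).const_mul ((-1 : ℝ) ^ (x + 1))
  convert h using 1
  · funext M
    simp_rw [altHarmonic_window, Finset.mul_sum]
    rw [Finset.sum_comm]
    refine Finset.sum_congr rfl fun x _ => Finset.sum_congr rfl fun p _ => ?_
    split_ifs
    · have hs : ((-1 : ℝ) ^ (p + 1)) * (-1) ^ (p + 1) = 1 := by
        rw [← mul_pow]; simp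
      rw [pow_add _ (p + 1) (x + 1), div_mul_div_comm, ← mul_assoc, hs, one_mul, mul_one_div]
    · simp
  · congr 1
    refine Finset.sum_congr rfl fun x _ => ?_
    ring

lemma reflectedSum_eq (K : ℕ) :
    (-1) ^ (K + 1) * reflectedSum (K + 1) + altHarmonic 0 K / ((K : ℝ) + 1) =
      ∑ x ∈ Finset.range K, (-1 : ℝ) ^ (x + 1) / ((x + 1 : ℕ) : ℝ) *
        ∑ i ∈ Finset.range (x + 1), 1 / (((K - x : ℕ) : ℝ) + 1 + i) := by
  have hs : ((-1 : ℝ) ^ (K + 1)) * (-1) ^ (K + 1) = 1 := by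
    rw [← mul_pow]; simp
  have hblock : ∀ x ∈ Finset.range K, ∑ i ∈ Finset.range (x + 1), 1 / (((K - x : ℕ) : ℝ) + 1 + i) =
      ∑ l ∈ Finset.Ico 1 (x + 1), 1 / (((K + 1 : ℕ) : ℝ) - l) + 1 / ((K : ℝ) + 1) := by
    intro x hx
    rw [Finset.mem_range] at hx
    rw [← Finset.sum_range_reflect, Finset.sum_range_succ', Finset.sum_Ico_eq_sum_range]
    simp only [Nat.add_sub_cancel]
    rw [Nat.cast_sub hx.le]
    congr 1
    · refine Finset.sum_congr rfl fun i hi => ?_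
      rw [Finset.mem_range] at hi
      rw [Nat.cast_sub (by omega : i + 1 ≤ x)]
      push_cast
      ring
    · congr 1
      simp only [Nat.sub_zero]
      ring
  have hswap : ∑ l ∈ Finset.Ico 1 (K + 1), altHarmonic l K / (((K + 1 : ℕ) : ℝ) - l) =
      ∑ m ∈ Finset.Ioc 0 K, (-1 : ℝ) ^ m / m *
        ∑ l ∈ Finset.Ico 1 m, 1 / (((K + 1 : ℕ) : ℝ) - l) := by
    simp_rw [altHarmonic, Finset.sum_div, Finset.mul_sum]
    rw [Finset.sum_comm' (t' := Finset.Ioc 0 K) (s' := fun m => Finset.Ico 1 m)]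
    · refine Finset.sum_congr rfl fun m _ => Finset.sum_congr rfl fun l _ => ?_
      ring
    · intro l m
      simp only [Finset.mem_Ico, Finset.mem_Ioc]
      omega
  rw [reflectedSum, ← mul_assoc, hs, one_mul, Nat.add_sub_cancel, hswap, altHarmonic,
    Finset.sum_div, ← Finset.sum_add_distrib]
  have hr := sum_Ioc_eq_sum_range_add (fun m : ℕ => (-1 : ℝ) ^ m / m *
    ∑ l ∈ Finset.Ico 1 m, 1 / (((K + 1 : ℕ) : ℝ) - l) + (-1 : ℝ) ^ m / m / ((K : ℝ) + 1)) 0 K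
  rw [zero_add] at hr
  rw [hr]
  refine Finset.sum_congr rfl fun x hx => ?_
  rw [hblock x hx, show 0 + 1 + x = x + 1 by ring]
  ring

lemma unshiftedSum_add (k M : ℕ) : unshiftedSum k (k + M) =
    ∑ p ∈ Finset.range M, (-1 : ℝ) ^ (p + 1) / ((p : ℝ) + 1) * altHarmonic k (p + 1) +
      ∑ i ∈ Finset.range k, (-1 : ℝ) ^ (M + i + 1) * altHarmonic k (M + i + 1) *
        (1 / ((M : ℝ) + 1 + i)) := by
  have h : unshiftedSum k (k + M) = ∑ n ∈ Finset.Ioc 0 (0 + (M + k)),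
      (-1 : ℝ) ^ n / n * altHarmonic k n := by
    refine Finset.sum_subset ?_ ?_
    · intro n
      simp only [Finset.mem_Ioc]
      omega
    · intro n hn hn'
      simp only [Finset.mem_Ioc] at hn hn'
      rw [altHarmonic_of_le (by omega), mul_zero]
  rw [h, sum_Ioc_eq_sum_range_add, Finset.sum_range_add]
  congr 1
  · refine Finset.sum_congr rfl fun p _ => ?_
    rw [show 0 + 1 + p = p + 1 by ring]
    push_cast
    rfl
  · refine Finset.sum_congr rfl fun i _ => ?_
    rw [show 0 + 1 + (M + i) = M + i + 1 by ring]
    push_cast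
    ring

/-- The coefficient of `k⁻ᵘ` in the difference of the two truncated sides. -/
noncomputable def coeffDiff (k N : ℕ) : ℝ :=
  shiftedSum k N - reflectedSum k - (-1) ^ k * (unshiftedSum k N + altHarmonic 0 (k - 1) / k)

lemma tendsto_coeffDiff (k : ℕ) (hk : 0 < k) :
    Tendsto (fun N => coeffDiff k N) atTop (nhds 0) := by
  obtain ⟨K, rfl⟩ := Nat.exists_eq_add_of_lt hk
  rw [zero_add]
  rw [← tendsto_add_atTop_iff_nat (K + 1)]
  have hs : ((-1 : ℝ) ^ (K + 1)) * (-1) ^ (K + 1) = 1 := by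
    rw [← mul_pow]; simp
  have hboundary : Tendsto (fun M : ℕ => ∑ i ∈ Finset.range (K + 1),
      (-1 : ℝ) ^ (M + i + 1) * altHarmonic (K + 1) (M + i + 1) * (1 / ((M : ℝ) + 1 + i)))
      atTop (nhds (∑ i ∈ Finset.range (K + 1), (0 : ℝ))) := by
    refine tendsto_finsetSum _ fun i _ => ?_
    refine squeeze_zero_norm (fun M => ?_) (tendsto_one_div_add i)
    rw [Real.norm_eq_abs, abs_mul, abs_mul, abs_pow, abs_neg, abs_one, one_pow, one_mul,
      abs_of_pos (by positivity : (0 : ℝ) < 1 / ((M : ℝ) + 1 + i))]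
    exact mul_le_of_le_one_left (by positivity) (abs_altHarmonic_le_one _ _)
  rw [Finset.sum_const_zero] at hboundary
  have h := (((tendsto_window_sum K).sub_const
    ((-1) ^ (K + 1) * reflectedSum (K + 1) + altHarmonic 0 K / ((K : ℝ) + 1))).sub
      hboundary).const_mul ((-1 : ℝ) ^ (K + 1))
  rw [← reflectedSum_eq K, sub_self, sub_zero, mul_zero] at h
  refine h.congr fun M => ?_
  rw [add_comm M, coeffDiff, unshiftedSum_add, shiftedSum_add]
  have hsh : ∑ i ∈ Finset.range M, (-1 : ℝ) ^ (K + 1 + 1 + i) / ((i : ℝ) + 1) *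
      altHarmonic (K + 1) (K + 1 + i) = (-1) ^ (K + 1) * ∑ p ∈ Finset.range M,
        (-1 : ℝ) ^ (p + 1) / ((p : ℝ) + 1) * altHarmonic (K + 1) (K + 1 + p) := by
    rw [Finset.mul_sum]
    refine Finset.sum_congr rfl fun i _ => ?_
    rw [add_assoc (K + 1) 1 i, pow_add _ (K + 1) (1 + i), add_comm 1 i]
    ring
  rw [hsh]
  simp_rw [mul_sub]
  rw [Finset.sum_sub_distrib, Nat.add_sub_cancel]
  push_cast
  linear_combination (-(reflectedSum (K + 1))) * hs

lemma abs_coeffDiff_le (k N : ℕ) : |coeffDiff k N| ≤ 6 := by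
  have h1 := abs_shiftedSum_le k N
  have h2 := abs_unshiftedSum_le k N
  have h3 := abs_reflectedSum_le k
  have h4 : |altHarmonic 0 (k - 1) / k| ≤ 1 := by
    rw [abs_div, Nat.abs_cast]
    rcases Nat.eq_zero_or_pos k with rfl | hk
    · simp
    · have hk' : (1 : ℝ) ≤ k := by exact_mod_cast hk
      rw [div_le_one (by linarith)]
      linarith [abs_altHarmonic_le_one 0 (k - 1)]
  have h5 : |(-1) ^ k * (unshiftedSum k N + altHarmonic 0 (k - 1) / k)| ≤ 3 := by
    rw [abs_mul, abs_pow, abs_neg, abs_one, one_pow, one_mul]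
    linarith [abs_add_le (unshiftedSum k N) (altHarmonic 0 (k - 1) / k)]
  have h6 := abs_sub (shiftedSum k N) (reflectedSum k)
  have h7 := abs_sub (shiftedSum k N - reflectedSum k)
    ((-1) ^ k * (unshiftedSum k N + altHarmonic 0 (k - 1) / k))
  unfold coeffDiff
  linarith

lemma tendsto_sum_coeffDiff (u : ℕ) (hu : 2 ≤ u) :
    Tendsto (fun N => ∑ k ∈ Finset.Icc 1 N, coeffDiff k N / (k : ℝ) ^ u) atTop (nhds 0) := by
  have h := tendsto_tsum_of_dominated_convergence (𝓕 := atTop)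
    (f := fun N k : ℕ => if k ∈ Finset.Icc 1 N then coeffDiff k N / (k : ℝ) ^ u else 0)
    (g := fun _ => (0 : ℝ)) (bound := fun k : ℕ => 6 * (1 / (k : ℝ) ^ u))
    ((Real.summable_one_div_nat_pow.mpr (by omega)).mul_left 6) ?_ ?_
  · rw [tsum_zero] at h
    refine h.congr fun N => ?_
    rw [tsum_eq_sum (s := Finset.Icc 1 N) (fun k hk => if_neg hk)]
    exact Finset.sum_congr rfl fun k hk => if_pos hk
  · intro k
    rcases Nat.eq_zero_or_pos k with rfl | hk
    · simp
    · have h1 := (tendsto_coeffDiff k hk).div_const ((k : ℝ) ^ u)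
      rw [zero_div] at h1
      refine h1.congr' ?_
      filter_upwards [eventually_ge_atTop k] with N hN
      rw [if_pos (Finset.mem_Icc.mpr ⟨hk, hN⟩)]
  · refine Eventually.of_forall fun N k => ?_
    split_ifs
    · rw [Real.norm_eq_abs, abs_div, abs_of_nonneg (by positivity : (0 : ℝ) ≤ (k : ℝ) ^ u),
        div_eq_mul_one_div]
      exact mul_le_mul_of_nonneg_right (abs_coeffDiff_le k N) (by positivity)
    · rw [norm_zero]
      positivity

lemma summable_sqrt_div_sq : Summable (fun n : ℕ => √(n : ℝ) / (n : ℝ) ^ 2) := by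
  refine (Real.summable_one_div_nat_rpow.mpr (by norm_num : (1 : ℝ) < 3 / 2)).congr fun n => ?_
  rcases Nat.eq_zero_or_pos n with rfl | hn
  · norm_num
  · have hn' : (0 : ℝ) < n := by exact_mod_cast hn
    rw [Real.sqrt_eq_rpow, ← Real.rpow_natCast, ← Real.rpow_sub hn', one_div, ← Real.rpow_neg hn'.le]
    norm_num

lemma sum_one_div_sqrt_le (n : ℕ) : ∑ m ∈ Finset.Ico 1 n, 1 / √(m : ℝ) ≤ 2 * √(n : ℝ) := by
  have h : ∀ n : ℕ, ∑ m ∈ Finset.range n, 1 / √(((m + 1 : ℕ) : ℝ)) ≤ 2 * √(n : ℝ) := by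
    intro n
    induction n with
    | zero => simp
    | succ n ih =>
      rw [Finset.sum_range_succ]
      have h0 : 0 < √((n + 1 : ℕ) : ℝ) := Real.sqrt_pos.mpr (by positivity)
      have h1 : √((n + 1 : ℕ) : ℝ) ^ 2 = n + 1 := by
        rw [Real.sq_sqrt (by positivity)]; push_cast; rfl
      have h2 : √(n : ℝ) ^ 2 = n := Real.sq_sqrt (by positivity)
      have h3 : 2 * √(n : ℝ) + 1 / √((n + 1 : ℕ) : ℝ) ≤ 2 * √((n + 1 : ℕ) : ℝ) := by
        rw [← sub_nonneg]
        have e : 2 * √((n + 1 : ℕ) : ℝ) - (2 * √(n : ℝ) + 1 / √((n + 1 : ℕ) : ℝ)) =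
            (√((n + 1 : ℕ) : ℝ) - √(n : ℝ)) ^ 2 / √((n + 1 : ℕ) : ℝ) := by
          field_simp
          linear_combination h1 - h2
        rw [e]
        positivity
      linarith
  rw [Finset.sum_Ico_eq_sum_range]
  simp_rw [add_comm 1]
  refine (h (n - 1)).trans ?_
  gcongr
  exact Nat.sub_le n 1

lemma abs_sum_div_pow_le (e : ℝ) (he : |e| = 1) (c : ℕ) (hc : 1 ≤ c) (n : ℕ) :
    |∑ k ∈ Finset.Ico 1 n, e ^ k / (k : ℝ) ^ c| ≤ 2 * √(n : ℝ) := by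
  refine (Finset.abs_sum_le_sum_abs _ _).trans
    ((Finset.sum_le_sum fun k hk => ?_).trans (sum_one_div_sqrt_le n))
  have hk1 : (1 : ℝ) ≤ k := by exact_mod_cast (Finset.mem_Ico.mp hk).1
  rw [abs_div, abs_pow, he, one_pow, abs_of_pos (by positivity : (0 : ℝ) < (k : ℝ) ^ c)]
  refine one_div_le_one_div_of_le (Real.sqrt_pos.mpr (by linarith)) ?_
  exact (Real.sqrt_le_iff.mpr ⟨by linarith, by nlinarith⟩).trans (le_self_pow₀ hk1 (by omega))

lemma abs_alternating_div_mul_le {n : ℕ} {h C : ℝ} (hh : |h| ≤ C * √(n : ℝ)) :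
    |(-1 : ℝ) ^ n / n * h| ≤ C * (1 / √(n : ℝ)) := by
  rw [abs_mul, abs_div, abs_pow, abs_neg, abs_one, one_pow, Nat.abs_cast, one_div, one_div,
    ← Real.sqrt_div_self, mul_comm]
  calc |h| * (n : ℝ)⁻¹ ≤ C * √(n : ℝ) * (n : ℝ)⁻¹ := by gcongr
    _ = _ := by ring

lemma sum_Icc_one_eq_sum_range {f : ℕ → ℝ} (hf : f 0 = 0) (N : ℕ) :
    ∑ n ∈ Finset.Icc 1 N, f n = ∑ n ∈ Finset.range (N + 1), f n := by
  rw [Finset.sum_range_succ', hf, add_zero, Finset.range_eq_Ico, Finset.sum_Ico_add' f 0 N 1]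
  rfl

lemma exists_tendsto_of_two_le (G : ℕ → ℝ) (C e : ℝ) (he : |e| = 1) (a : ℕ) (ha : 2 ≤ a)
    (hG : ∀ n : ℕ, |G n| ≤ C * √(n : ℝ)) :
    ∃ l, Tendsto (fun N : ℕ => ∑ n ∈ Finset.Icc 1 N, e ^ n * (G n / (n : ℝ) ^ a)) atTop
      (nhds l) := by
  have hs : Summable (fun n : ℕ => e ^ n * (G n / (n : ℝ) ^ a)) := by
    refine Summable.of_norm_bounded (summable_sqrt_div_sq.mul_left C) fun n => ?_
    rw [Real.norm_eq_abs, abs_mul, abs_pow, he, one_pow, one_mul, abs_div, abs_pow, Nat.abs_cast]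
    rcases Nat.eq_zero_or_pos n with rfl | hn
    · simp [show a ≠ 0 by omega]
    · have hn' : (1 : ℝ) ≤ n := by exact_mod_cast hn
      rw [← mul_div_assoc]
      have h0 := (abs_nonneg _).trans (hG n)
      exact div_le_div₀ h0 (hG n) (by positivity) (pow_le_pow_right₀ hn' ha)
  refine ⟨_, (((tendsto_add_atTop_iff_nat 1).mpr hs.hasSum.tendsto_sum_nat).congr fun N => ?_)⟩
  exact (sum_Icc_one_eq_sum_range (by simp [show a ≠ 0 by omega]) N).symm

lemma exists_tendsto_alternating (G : ℕ → ℝ) (C : ℝ) (hG1 : G 1 = 0)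
    (hG : ∀ n : ℕ, |G n| ≤ C * √(n : ℝ))
    (hG' : ∀ n : ℕ, 1 ≤ n → |G (n + 1) - G n| ≤ C * (1 / √(n : ℝ))) :
    ∃ l, Tendsto (fun N : ℕ => ∑ n ∈ Finset.Icc 1 N, (-1 : ℝ) ^ n * (G n / n)) atTop
      (nhds l) := by
  have hs : Summable (fun n : ℕ => (-1 : ℝ) ^ n * (G n / n - G (n + 1) / ((n + 1 : ℕ) : ℝ))) := by
    refine Summable.of_norm_bounded (summable_sqrt_div_sq.mul_left (2 * C)) fun n => ?_
    rw [Real.norm_eq_abs, abs_mul, abs_pow, abs_neg, abs_one, one_pow, one_mul]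
    rcases Nat.eq_zero_or_pos n with rfl | hn
    · simp [hG1]
    · have hn' : (1 : ℝ) ≤ n := by exact_mod_cast hn
      have h1 := hG n
      have h2 := hG' n hn
      have e : G n / n - G (n + 1) / ((n + 1 : ℕ) : ℝ) =
          G n / (n * (n + 1)) - (G (n + 1) - G n) / (n + 1) := by
        push_cast
        field_simp
        ring
      rw [e]
      refine (abs_sub _ _).trans ?_
      rw [abs_div, abs_div, abs_of_pos (by positivity : (0 : ℝ) < (n : ℝ) * (n + 1)),
        abs_of_pos (by positivity : (0 : ℝ) < (n : ℝ) + 1)]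
      have h3 : |G n| / ((n : ℝ) * (n + 1)) ≤ C * √(n : ℝ) / (n : ℝ) ^ 2 :=
        div_le_div₀ ((abs_nonneg _).trans h1) h1 (by positivity) (by nlinarith)
      have h4 : |G (n + 1) - G n| / ((n : ℝ) + 1) ≤ C * (1 / √(n : ℝ)) / n :=
        div_le_div₀ ((abs_nonneg _).trans h2) h2 (by positivity) (by linarith)
      have h5 : C * (1 / √(n : ℝ)) / n = C * √(n : ℝ) / (n : ℝ) ^ 2 := by
        rw [one_div, ← Real.sqrt_div_self]
        field_simp
      rw [h5] at h4
      calc _ ≤ _ := add_le_add h3 h4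
        _ = _ := by ring
  have hzero : Tendsto (fun n : ℕ => (-1 : ℝ) ^ n * (G n / n)) atTop (nhds 0) := by
    have hb : Tendsto (fun n : ℕ => C * (√(n : ℝ))⁻¹) atTop (nhds (C * 0)) :=
      (tendsto_inv_atTop_zero.comp
        (Real.tendsto_sqrt_atTop.comp tendsto_natCast_atTop_atTop)).const_mul C
    rw [mul_zero] at hb
    refine squeeze_zero_norm (fun n => ?_) hb
    have := abs_alternating_div_mul_le (hG n)
    rw [one_div] at this
    rw [Real.norm_eq_abs, ← mul_comm_div]
    exact this
  have key : Tendsto (fun N : ℕ => ∑ n ∈ Finset.range N, (-1 : ℝ) ^ n * (G n / n)) atTop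
      (nhds ((G 0 / (0 : ℕ) - 0 +
        ∑' n : ℕ, (-1 : ℝ) ^ n * (G n / n - G (n + 1) / ((n + 1 : ℕ) : ℝ))) / 2)) := by
    refine (((tendsto_const_nhds.sub hzero).add hs.hasSum.tendsto_sum_nat).div_const 2).congr
      fun N => ?_
    rw [← two_mul_sum_alternating (fun n => G n / n) N]
    ring
  refine ⟨_, (((tendsto_add_atTop_iff_nat 1).mpr key).congr fun N => ?_)⟩
  exact (sum_Icc_one_eq_sum_range (by simp) N).symm

lemma tendsto_eulerSum2 (a c : ℕ) (ha : 2 ≤ a) (hc : 1 ≤ c) (e f : ℝ) (he : |e| = 1)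
    (hf : |f| = 1) :
    Tendsto (fun N : ℕ => ∑ n₁ ∈ Finset.Icc 1 N, ∑ n₂ ∈ Finset.Ico 1 n₁,
      e ^ n₁ * f ^ n₂ / ((n₁ : ℝ) ^ a * (n₂ : ℝ) ^ c)) atTop (nhds (eulerSum2 a c e f)) := by
  obtain ⟨l, hl⟩ := exists_tendsto_of_two_le
    (fun n => ∑ k ∈ Finset.Ico 1 n, f ^ k / (k : ℝ) ^ c) 2 e he a ha
    (fun n => abs_sum_div_pow_le f hf c hc n)
  refine tendsto_nhds_limUnder ⟨l, hl.congr fun N => Finset.sum_congr rfl fun n _ => ?_⟩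
  rw [Finset.sum_div, Finset.mul_sum]
  refine Finset.sum_congr rfl fun k _ => ?_
  rw [div_div, mul_div_assoc, mul_comm ((n : ℝ) ^ a)]

lemma tendsto_eulerSum3 (a c : ℕ) (ha : 1 ≤ a) (hc : 1 ≤ c) (e : ℝ) (he : |e| = 1) :
    Tendsto (fun N : ℕ => ∑ n₁ ∈ Finset.Icc 1 N, ∑ n₂ ∈ Finset.Ico 1 n₁, ∑ n₃ ∈ Finset.Ico 1 n₂,
      (-1 : ℝ) ^ n₁ * (-1) ^ n₂ * e ^ n₃ / ((n₁ : ℝ) ^ a * (n₂ : ℝ) ^ 1 * (n₃ : ℝ) ^ c)) atTop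
      (nhds (eulerSum3 a 1 c (-1) (-1) e)) := by
  have hinner : ∀ m : ℕ, |(-1 : ℝ) ^ m / m * ∑ k ∈ Finset.Ico 1 m, e ^ k / (k : ℝ) ^ c| ≤
      2 * (1 / √(m : ℝ)) := fun m => abs_alternating_div_mul_le (abs_sum_div_pow_le e he c hc m)
  have hmid : ∀ n : ℕ, |∑ m ∈ Finset.Ico 1 n,
      (-1 : ℝ) ^ m / m * ∑ k ∈ Finset.Ico 1 m, e ^ k / (k : ℝ) ^ c| ≤ 4 * √(n : ℝ) := by
    intro n
    refine (Finset.abs_sum_le_sum_abs _ _).trans ((Finset.sum_le_sum fun m _ => hinner m).trans ?_)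
    rw [← Finset.mul_sum]
    linarith [sum_one_div_sqrt_le n]
  obtain ⟨l, hl⟩ : ∃ l, Tendsto (fun N : ℕ => ∑ n ∈ Finset.Icc 1 N, (-1 : ℝ) ^ n *
      ((∑ m ∈ Finset.Ico 1 n, (-1 : ℝ) ^ m / m * ∑ k ∈ Finset.Ico 1 m, e ^ k / (k : ℝ) ^ c) /
        (n : ℝ) ^ a)) atTop (nhds l) := by
    rcases ha.eq_or_lt with rfl | ha2
    · simp_rw [pow_one (_ : ℝ)]
      refine exists_tendsto_alternating (fun n => ∑ m ∈ Finset.Ico 1 n,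
        (-1 : ℝ) ^ m / m * ∑ k ∈ Finset.Ico 1 m, e ^ k / (k : ℝ) ^ c) 4 (by simp) hmid ?_
      intro n hn
      rw [Finset.sum_Ico_succ_top hn, add_sub_cancel_left]
      refine (hinner n).trans ?_
      gcongr
      norm_num
    · exact exists_tendsto_of_two_le _ 4 (-1) (by simp) a ha2 hmid
  refine tendsto_nhds_limUnder ⟨l, hl.congr fun N => Finset.sum_congr rfl fun n _ => ?_⟩
  rw [Finset.sum_div, Finset.mul_sum]
  refine Finset.sum_congr rfl fun m _ => ?_
  rw [Finset.mul_sum, Finset.sum_div, Finset.mul_sum]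
  refine Finset.sum_congr rfl fun k _ => ?_
  simp only [div_eq_mul_inv, mul_inv, pow_one]
  ring

lemma sum_triple_swap (f : ℕ → ℕ → ℕ → ℝ) (N : ℕ) :
    ∑ n ∈ Finset.Icc 1 N, ∑ m ∈ Finset.Ico 1 n, ∑ k ∈ Finset.Ico 1 m, f n m k =
      ∑ k ∈ Finset.Icc 1 N, ∑ n ∈ Finset.Ioc k N, ∑ m ∈ Finset.Ioc k (n - 1), f n m k := by
  have h : ∀ n ∈ Finset.Icc 1 N, ∑ m ∈ Finset.Ico 1 n, ∑ k ∈ Finset.Ico 1 m, f n m k =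
      ∑ k ∈ Finset.Ico 1 n, ∑ m ∈ Finset.Ioc k (n - 1), f n m k := by
    intro n _
    refine Finset.sum_comm' fun m k => ?_
    simp only [Finset.mem_Ico, Finset.mem_Ioc]
    omega
  rw [Finset.sum_congr rfl h]
  refine Finset.sum_comm' fun n k => ?_
  simp only [Finset.mem_Icc, Finset.mem_Ico, Finset.mem_Ioc]
  omega

lemma sum_double_swap (f : ℕ → ℕ → ℝ) (N : ℕ) :
    ∑ n ∈ Finset.Icc 1 N, ∑ k ∈ Finset.Ico 1 n, f n k =
      ∑ k ∈ Finset.Icc 1 N, ∑ n ∈ Finset.Ioc k N, f n k := by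
  refine Finset.sum_comm' fun n k => ?_
  simp only [Finset.mem_Icc, Finset.mem_Ico, Finset.mem_Ioc]
  omega

lemma sum_one_div_pow_mul_pow (u : ℕ) {x y : ℝ} (hx : x ≠ 0) (hy : y ≠ 0) (hxy : x - y ≠ 0) :
    ∑ a ∈ Finset.Icc 1 u, 1 / (x ^ a * y ^ (u + 1 - a)) = (1 / y ^ u - 1 / x ^ u) / (x - y) := by
  induction u with
  | zero => simp
  | succ u ih =>
    have h : ∀ a ∈ Finset.Icc 1 u, 1 / (x ^ a * y ^ (u + 1 + 1 - a)) =
        1 / y * (1 / (x ^ a * y ^ (u + 1 - a))) := by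
      intro a ha
      rw [Finset.mem_Icc] at ha
      rw [show u + 1 + 1 - a = u + 1 - a + 1 by omega, pow_succ y, one_div_mul_one_div]
      ring
    rw [Finset.sum_Icc_succ_top (by omega), Finset.sum_congr rfl h, ← Finset.mul_sum, ih,
      show u + 1 + 1 - (u + 1) = 1 by omega]
    field_simp
    ring

lemma left_partial_sum (u N : ℕ) :
    ∑ a ∈ Finset.Icc 1 u, ∑ n ∈ Finset.Icc 1 N, ∑ m ∈ Finset.Ico 1 n, ∑ k ∈ Finset.Ico 1 m,
      (-1 : ℝ) ^ n * (-1) ^ m * 1 ^ k / ((n : ℝ) ^ a * (m : ℝ) ^ 1 * (k : ℝ) ^ (u + 1 - a)) =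
      ∑ k ∈ Finset.Icc 1 N, (shiftedSum k N - reflectedSum k) / (k : ℝ) ^ u := by
  have hgeom : ∑ a ∈ Finset.Icc 1 u, ∑ n ∈ Finset.Icc 1 N, ∑ m ∈ Finset.Ico 1 n,
      ∑ k ∈ Finset.Ico 1 m, (-1 : ℝ) ^ n * (-1) ^ m * 1 ^ k /
        ((n : ℝ) ^ a * (m : ℝ) ^ 1 * (k : ℝ) ^ (u + 1 - a)) =
      ∑ n ∈ Finset.Icc 1 N, ∑ m ∈ Finset.Ico 1 n, ∑ k ∈ Finset.Ico 1 m,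
        ((-1 : ℝ) ^ n / ((n : ℝ) - k) * ((-1) ^ m / m) / (k : ℝ) ^ u -
          (-1 : ℝ) ^ n * ((-1) ^ m / m / ((n : ℝ) - k)) / (n : ℝ) ^ u) := by
    rw [Finset.sum_comm]
    refine Finset.sum_congr rfl fun n hn => ?_
    rw [Finset.sum_comm]
    refine Finset.sum_congr rfl fun m hm => ?_
    rw [Finset.sum_comm]
    refine Finset.sum_congr rfl fun k hk => ?_
    rw [Finset.mem_Icc] at hn
    rw [Finset.mem_Ico] at hm hk
    have hk0 : (k : ℝ) ≠ 0 := by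
      have : k ≠ 0 := by omega
      exact_mod_cast this
    have hn0 : (n : ℝ) ≠ 0 := by
      have : n ≠ 0 := by omega
      exact_mod_cast this
    have hnk : (n : ℝ) - k ≠ 0 := by
      have : (k : ℝ) < n := by exact_mod_cast hk.2.trans hm.2
      linarith
    have hsum := sum_one_div_pow_mul_pow u hn0 hk0 hnk
    calc _ = ∑ a ∈ Finset.Icc 1 u, (-1 : ℝ) ^ n * (-1) ^ m / m *
          (1 / ((n : ℝ) ^ a * (k : ℝ) ^ (u + 1 - a))) := by
          refine Finset.sum_congr rfl fun a _ => ?_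
          simp only [div_eq_mul_inv, mul_inv, pow_one, one_pow]
          ring
      _ = _ := by
          rw [← Finset.mul_sum, hsum]
          ring
  rw [hgeom]
  simp_rw [sub_div, Finset.sum_sub_distrib]
  congr 1
  · rw [sum_triple_swap]
    refine Finset.sum_congr rfl fun k _ => ?_
    rw [shiftedSum, Finset.sum_div]
    refine Finset.sum_congr rfl fun n _ => ?_
    rw [altHarmonic, Finset.mul_sum, Finset.sum_div]
  · refine Finset.sum_congr rfl fun n _ => ?_
    simp_rw [reflectedSum, altHarmonic, Finset.sum_div, Finset.mul_sum, Finset.sum_div]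
    refine Finset.sum_comm' fun m k => ?_
    simp only [Finset.mem_Ico, Finset.mem_Ioc]
    omega

lemma right_partial_sum (u N : ℕ) :
    (∑ n ∈ Finset.Icc 1 N, ∑ m ∈ Finset.Ico 1 n, ∑ k ∈ Finset.Ico 1 m,
      (-1 : ℝ) ^ n * (-1) ^ m * (-1) ^ k / ((n : ℝ) ^ 1 * (m : ℝ) ^ 1 * (k : ℝ) ^ u)) +
    (∑ n ∈ Finset.Icc 1 N, ∑ k ∈ Finset.Ico 1 n,
      (1 : ℝ) ^ n * (-1) ^ k / ((n : ℝ) ^ 2 * (k : ℝ) ^ u)) +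
    (∑ n ∈ Finset.Icc 1 N, ∑ m ∈ Finset.Ico 1 n,
      (-1 : ℝ) ^ n * (-1) ^ m / ((n : ℝ) ^ (u + 1) * (m : ℝ) ^ 1)) =
      ∑ k ∈ Finset.Icc 1 N,
        (-1) ^ k * (unshiftedSum k N + altHarmonic 0 (k - 1) / k) / (k : ℝ) ^ u := by
  rw [sum_triple_swap, sum_double_swap, ← Finset.sum_add_distrib, ← Finset.sum_add_distrib]
  refine Finset.sum_congr rfl fun k hk => ?_
  rw [mul_add, add_div]
  congr 1
  · rw [← Finset.sum_add_distrib, unshiftedSum, Finset.mul_sum, Finset.sum_div]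
    refine Finset.sum_congr rfl fun n hn => ?_
    rw [Finset.mem_Ioc] at hn
    obtain ⟨q, rfl⟩ : ∃ q, n = q + 1 := ⟨n - 1, by omega⟩
    have hs : ((-1 : ℝ) ^ (q + 1)) * (-1) ^ (q + 1) = 1 := by
      rw [← mul_pow]; simp
    rw [Nat.add_sub_cancel, altHarmonic_succ (by omega), mul_add, mul_add, add_div]
    congr 1
    · rw [altHarmonic, Finset.mul_sum, Finset.mul_sum, Finset.sum_div]
      refine Finset.sum_congr rfl fun m _ => ?_
      simp only [div_eq_mul_inv, mul_inv, pow_one]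
      ring
    · push_cast
      rw [div_mul_div_comm, hs, one_pow, one_mul, mul_one_div, div_div, sq]
  · rw [altHarmonic, Finset.sum_div, Finset.mul_sum, Finset.sum_div]
    refine Finset.sum_congr ?_ fun m _ => ?_
    · ext m
      simp only [Finset.mem_Ico, Finset.mem_Ioc]
      omega
    · simp only [div_eq_mul_inv, mul_inv, pow_one, pow_succ (k : ℝ) u]
      ring

/-- For `w ≥ 4`, with `u = w − 2`, `v = w − 1`:
`∑_{a+c=w−1, a,c≥1} ζ(ā,1̄,c) = ζ(1̄,1̄,ū) + ζ(2,ū) + ζ(v̄,1̄)`. -/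
theorem sum_zeta_bara_bar1_c (w : ℕ) (hw : 4 ≤ w) :
    ∑ a ∈ Finset.Icc 1 (w - 2), eulerSum3 a 1 (w - 1 - a) (-1) (-1) 1
      = eulerSum3 1 1 (w - 2) (-1) (-1) (-1) + eulerSum2 2 (w - 2) 1 (-1)
        + eulerSum2 (w - 1) 1 (-1) (-1) := by
  obtain ⟨u, rfl⟩ : ∃ u, w = u + 2 := ⟨w - 2, by omega⟩
  rw [show u + 2 - 2 = u by omega, show u + 2 - 1 = u + 1 by omega]
  have hleft := tendsto_finsetSum (Finset.Icc 1 u) fun a ha =>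
    tendsto_eulerSum3 a (u + 1 - a) (Finset.mem_Icc.mp ha).1
      (by have := (Finset.mem_Icc.mp ha).2; omega) 1 (by simp)
  have hright := ((tendsto_eulerSum3 1 u le_rfl (by omega) (-1) (by simp)).add
    (tendsto_eulerSum2 2 u le_rfl (by omega) 1 (-1) (by simp) (by simp))).add
    (tendsto_eulerSum2 (u + 1) 1 (by omega) le_rfl (-1) (-1) (by simp) (by simp))
  simp_rw [left_partial_sum] at hleft
  simp_rw [right_partial_sum] at hright
  refine sub_eq_zero.mp (tendsto_nhds_unique (hleft.sub hright) ?_)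
  refine (tendsto_sum_coeffDiff u (by omega)).congr fun N => ?_
  rw [← Finset.sum_sub_distrib]
  refine Finset.sum_congr rfl fun k _ => ?_
  rw [coeffDiff, sub_div]
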